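/- Let G be a quantitative two-player reachability game and let d ≥ (|Π|+1)·2·|V|. If there exists a secure equilibrium of a certain type in the truncated game G^d, then there exists a finite-memory secure equilibrium of the same type in G. -/

import Mathlib

/-- A quantitative multiplayer reachability game: a finite directed graph whose
vertex set is partitioned among the players (via `owner`), with an initial vertex `v0`,
an edge relation `E` such that every vertex has an outgoing edge, and a goal set
`goal i` for each player `i`. -/
structure ReachGame (P : Type) (V : Type) where
  owner : V → P
  v0 : V
  E : V → V → Prop
  total : ∀ v : V, ∃ w : V, E v w
  goal : P → Set V

namespace ReachGame

variable {P V : Type} [DecidableEq P] (G : ReachGame P V)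

/-- The last vertex of a history (with default `v0`). -/
def lastV (h : List V) : V := h.getLastD G.v0

/-- A history: a nonempty finite path in the graph starting at `v0`. -/
def IsHistory (h : List V) : Prop :=
  h ≠ [] ∧ h.head? = some G.v0 ∧ List.Chain' G.E h

/-- A play: an infinite path starting at `v0`. -/
def IsPlay (ρ : ℕ → V) : Prop :=
  ρ 0 = G.v0 ∧ ∀ k : ℕ, G.E (ρ k) (ρ (k + 1))

/-- `σ` is a (total encoding of a) strategy of player `i`: on every history ending in
a vertex owned by `i` it chooses a successor along an edge. -/
def IsStrategy (i : P) (σ : List V → V) : Prop :=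
  ∀ h : List V, G.IsHistory h → G.owner (G.lastV h) = i → G.E (G.lastV h) (σ h)

/-- A strategy profile: one strategy per player. -/
def IsProfile (prof : P → List V → V) : Prop :=
  ∀ i : P, G.IsStrategy i (prof i)

/-- The history of length `n` (i.e. with `n` edges) obtained by letting the players
follow the profile `prof` from `v0`. -/
def outHist (prof : P → List V → V) : ℕ → List V
  | 0 => [G.v0]
  | n + 1 => outHist prof n ++ [prof (G.owner (G.lastV (outHist prof n))) (outHist prof n)]

/-- The outcome play of the strategy profile `prof`. -/
def outcome (prof : P → List V → V) (n : ℕ) : V :=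
  G.lastV (G.outHist prof n)

/-- The cost of player `i` for the play `ρ`: the least `l` with `ρ l ∈ goal i`,
and `⊤` (`+∞`) if there is no such `l`. -/
noncomputable def cost (i : P) (ρ : ℕ → V) : ℕ∞ :=
  sInf {n : ℕ∞ | ∃ l : ℕ, n = (l : ℕ∞) ∧ ρ l ∈ G.goal i}

/-- Nash equilibrium: no player can strictly decrease his cost by a unilateral
deviation. -/
def IsNash (prof : P → List V → V) : Prop :=
  ∀ (j : P) (σ' : List V → V), G.IsStrategy j σ' →
    G.cost j (G.outcome prof) ≤ G.cost j (G.outcome (Function.update prof j σ'))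

/-- `h ≈_σ h'` : the strategy `σ` of player `i` behaves the same after `h` and `h'`,
i.e. `σ (h ++ δ) = σ (h' ++ δ)` for every suffix `δ` making both `h ++ δ` and
`h' ++ δ` histories ending in a vertex of player `i`. -/
def MemEq (i : P) (σ : List V → V) (h h' : List V) : Prop :=
  ∀ δ : List V,
    G.IsHistory (h ++ δ) → G.owner (G.lastV (h ++ δ)) = i →
    G.IsHistory (h' ++ δ) → G.owner (G.lastV (h' ++ δ)) = i →
    σ (h ++ δ) = σ (h' ++ δ)

/-- A strategy of player `i` is finite-memory if the relation `≈_σ` has finitely many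
equivalence classes on histories, i.e. there is a finite set of histories meeting
every class. -/
def FiniteMemory (i : P) (σ : List V → V) : Prop :=
  ∃ S : Finset (List V), ∀ h : List V, G.IsHistory h →
    ∃ h' ∈ S, G.IsHistory h' ∧ G.MemEq i σ h h'

/-- A profile is finite-memory if each of its strategies is. -/
def FiniteMemoryProfile (prof : P → List V → V) : Prop :=
  ∀ i : P, G.FiniteMemory i (prof i)

/-- `Visit h`: the set of players whose goal set is visited by the finite path `h`. -/
def visitL (h : List V) : Set P := {i : P | ∃ v ∈ h, v ∈ G.goal i}

/-- The type of a strategy profile: the set of players whose goal set is visited by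
the outcome. -/
def typeOf (prof : P → List V → V) : Set P :=
  {i : P | ∃ l : ℕ, G.outcome prof l ∈ G.goal i}

/-! ### The truncated game `G^d` -/

/-- A strategy of player `i` in the truncated game `G^d` : it chooses a successor on
every history with less than `d` edges (list length `≤ d`) ending in a vertex of `i`. -/
def IsStrategyTrunc (d : ℕ) (i : P) (σ : List V → V) : Prop :=
  ∀ h : List V, G.IsHistory h → h.length ≤ d → G.owner (G.lastV h) = i →
    G.E (G.lastV h) (σ h)

/-- A strategy profile of the truncated game `G^d`. -/
def IsProfileTrunc (d : ℕ) (prof : P → List V → V) : Prop :=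
  ∀ i : P, G.IsStrategyTrunc d i (prof i)

/-- The cost of player `i` for a finite play `h` (a list of vertices): the least
position of `h` lying in `goal i`, and `⊤` if `goal i` is not visited. -/
noncomputable def costList (i : P) (h : List V) : ℕ∞ :=
  sInf {n : ℕ∞ | ∃ l : ℕ, n = (l : ℕ∞) ∧ l < h.length ∧ h.getD l G.v0 ∈ G.goal i}

/-- Nash equilibrium of the truncated game `G^d` (whose plays are the histories with
exactly `d` edges). -/
def IsNashTrunc (d : ℕ) (prof : P → List V → V) : Prop :=
  ∀ (j : P) (σ' : List V → V), G.IsStrategyTrunc d j σ' →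
    G.costList j (G.outHist prof d) ≤
      G.costList j (G.outHist (Function.update prof j σ') d)

/-- The type of a strategy profile of the truncated game `G^d`. -/
def typeOfTrunc (d : ℕ) (prof : P → List V → V) : Set P :=
  G.visitL (G.outHist prof d)

end ReachGame

/-- `(x₁,x₂) ≺₁ (y₁,y₂)` iff `x₁ > y₁`, or `x₁ = y₁` and `x₂ < y₂` :
player 1 prefers the cost profile `y` to `x`. -/
def prec1 (x y : ℕ∞ × ℕ∞) : Prop := y.1 < x.1 ∨ (x.1 = y.1 ∧ x.2 < y.2)

/-- `(x₁,x₂) ≺₂ (y₁,y₂)` iff `x₂ > y₂`, or `x₂ = y₂` and `x₁ < y₁` :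
player 2 prefers the cost profile `y` to `x`. -/
def prec2 (x y : ℕ∞ × ℕ∞) : Prop := y.2 < x.2 ∨ (x.2 = y.2 ∧ x.1 < y.1)

namespace ReachGame

variable {V : Type} (G : ReachGame (Fin 2) V)

/-- The pair of costs of the two players for the play `ρ`. -/
noncomputable def costPair (ρ : ℕ → V) : ℕ∞ × ℕ∞ := (G.cost 0 ρ, G.cost 1 ρ)

/-- Secure equilibrium: no player `j` has a `≺ⱼ`-profitable deviation. -/
def IsSecure (prof : Fin 2 → List V → V) : Prop :=
  (∀ σ' : List V → V, G.IsStrategy 0 σ' →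
    ¬ prec1 (G.costPair (G.outcome prof))
        (G.costPair (G.outcome (Function.update prof 0 σ')))) ∧
  (∀ σ' : List V → V, G.IsStrategy 1 σ' →
    ¬ prec2 (G.costPair (G.outcome prof))
        (G.costPair (G.outcome (Function.update prof 1 σ'))))

/-- The pair of costs of the two players for a finite play `h`. -/
noncomputable def costListPair (h : List V) : ℕ∞ × ℕ∞ := (G.costList 0 h, G.costList 1 h)

/-- Secure equilibrium of the truncated game `G^d`. -/
def IsSecureTrunc (d : ℕ) (prof : Fin 2 → List V → V) : Prop :=
  (∀ σ' : List V → V, G.IsStrategyTrunc d 0 σ' →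
    ¬ prec1 (G.costListPair (G.outHist prof d))
        (G.costListPair (G.outHist (Function.update prof 0 σ') d))) ∧
  (∀ σ' : List V → V, G.IsStrategyTrunc d 1 σ' →
    ¬ prec2 (G.costListPair (G.outHist prof d))
        (G.costListPair (G.outHist (Function.update prof 1 σ') d)))

end ReachGame

namespace ReachGame

section General

variable {P V : Type} [DecidableEq P] (G : ReachGame P V)

open Classical in
/-- choose a successor in `A` if possible, else any successor -/
noncomputable def pick (A : Set V) (v : V) : V :=
  if h : ∃ w, G.E v w ∧ w ∈ A then h.choose else (G.total v).choose

lemma pick_E (A : Set V) (v : V) : G.E v (G.pick A v) := by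
  unfold pick
  split_ifs with h
  · exact h.choose_spec.1
  · exact (G.total v).choose_spec

lemma pick_mem (A : Set V) (v : V) (h : ∃ w, G.E v w ∧ w ∈ A) : G.pick A v ∈ A := by
  unfold pick
  rw [dif_pos h]
  exact h.choose_spec.2

/-- vertices from which `i` can force reaching `T` within `t` steps -/
def attr (T : Set V) (i : P) : ℕ → Set V
  | 0 => T
  | t + 1 => {v | v ∈ T ∨ (G.owner v = i ∧ ∃ w, G.E v w ∧ w ∈ attr T i t) ∨
      (G.owner v ≠ i ∧ ∀ w, G.E v w → w ∈ attr T i t)}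

lemma attr_base (T : Set V) (i : P) (t : ℕ) : T ⊆ G.attr T i t := by
  intro v hv
  cases t with
  | zero => exact hv
  | succ t => exact Or.inl hv

lemma attr_succ (T : Set V) (i : P) (t : ℕ) : G.attr T i t ⊆ G.attr T i (t + 1) := by
  induction t with
  | zero => intro v hv; exact Or.inl hv
  | succ t ih =>
    rintro v (hv | ⟨h1, w, h2, h3⟩ | ⟨h1, h2⟩)
    · exact Or.inl hv
    · exact Or.inr (Or.inl ⟨h1, w, h2, ih h3⟩)
    · exact Or.inr (Or.inr ⟨h1, fun w hw => ih (h2 w hw)⟩)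

lemma attr_stable_step (T : Set V) (i : P) (s : ℕ) (h : G.attr T i s = G.attr T i (s + 1))
    (k : ℕ) : G.attr T i (s + k) = G.attr T i s := by
  induction k with
  | zero => rfl
  | succ k ih =>
    have : G.attr T i (s + k + 1) = G.attr T i (s + 1) := by
      simp only [attr, ih]
    rw [← add_assoc, this, ← h]

lemma attr_stable [Fintype V] (T : Set V) (i : P) (k : ℕ) (hk : Fintype.card V ≤ k) :
    G.attr T i k = G.attr T i (Fintype.card V) := by
  have key : ∀ t, (∃ s < t, G.attr T i s = G.attr T i (s + 1)) ∨ t ≤ (G.attr T i t).ncard := by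
    intro t
    induction t with
    | zero => right; exact Nat.zero_le _
    | succ t ih =>
      rcases ih with ⟨s, hs, h⟩ | h
      · exact Or.inl ⟨s, by omega, h⟩
      · by_cases he : G.attr T i t = G.attr T i (t + 1)
        · exact Or.inl ⟨t, by omega, he⟩
        · right
          have : (G.attr T i t).ncard < (G.attr T i (t + 1)).ncard :=
            Set.ncard_lt_ncard (lt_of_le_of_ne (G.attr_succ T i t) he) (Set.toFinite _)
          omega
  rcases key (Fintype.card V + 1) with ⟨s, hs, h⟩ | h
  · obtain ⟨a, ha⟩ := Nat.exists_eq_add_of_le (show s ≤ Fintype.card V by omega)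
    obtain ⟨b, hb⟩ := Nat.exists_eq_add_of_le (show s ≤ k by omega)
    rw [hb, ha, attr_stable_step G T i s h, attr_stable_step G T i s h]
  · have := Set.ncard_le_card (G.attr T i (Fintype.card V + 1))
    rw [Nat.card_eq_fintype_card] at this
    omega

lemma outHist_length (p : P → List V → V) (k : ℕ) : (G.outHist p k).length = k + 1 := by
  induction k with
  | zero => rfl
  | succ k ih => simp [outHist, ih]

lemma outcome_succ (p : P → List V → V) (k : ℕ) :
    G.outcome p (k + 1) = p (G.owner (G.outcome p k)) (G.outHist p k) := by
  simp [outcome, outHist, lastV]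

lemma outHist_congr (p q : P → List V → V) (m : ℕ)
    (h : ∀ i l, l.length ≤ m → p i l = q i l) (k : ℕ) (hk : k ≤ m) :
    G.outHist p k = G.outHist q k := by
  induction k with
  | zero => rfl
  | succ k ih =>
    have := ih (by omega)
    simp only [outHist]
    rw [this, h _ _ (by rw [outHist_length]; omega)]

lemma outcome_congr (p q : P → List V → V) (m : ℕ)
    (h : ∀ i l, l.length ≤ m → p i l = q i l) (k : ℕ) (hk : k ≤ m) :
    G.outcome p k = G.outcome q k := by
  unfold outcome
  rw [G.outHist_congr p q m h k hk]

lemma outHist_getD (p : P → List V → V) (d l : ℕ) (hl : l ≤ d) :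
    (G.outHist p d).getD l G.v0 = G.outcome p l := by
  induction d with
  | zero =>
    obtain rfl : l = 0 := by omega
    simp [outHist, outcome, lastV]
  | succ d ih =>
    rcases Nat.lt_or_ge d l with h | h
    · obtain rfl : l = d + 1 := by omega
      rw [outcome_succ]
      simp [outHist, outHist_length, outcome]
    · rw [← ih h]
      simp only [outHist]
      rw [List.getD_append _ _ _ _ (by rw [outHist_length]; omega)]

lemma outHist_hist (p : P → List V → V) (d : ℕ) (hp : G.IsProfileTrunc d p) (k : ℕ)
    (hk : k ≤ d) : G.IsHistory (G.outHist p k) := by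
  induction k with
  | zero => exact ⟨by simp [outHist], by simp [outHist], List.isChain_singleton _⟩
  | succ k ih =>
    have h := ih (by omega)
    have hE := hp _ _ h (by rw [outHist_length]; omega) rfl
    obtain ⟨h1, h2, h3⟩ := h
    refine ⟨by simp [outHist], ?_, ?_⟩
    · simp only [outHist]
      rw [List.head?_append, h2]; rfl
    · simp only [outHist]
      refine List.IsChain.append h3 (by simp) ?_
      intro x hx y hy
      simp only [List.head?_cons, Option.mem_def, Option.some.injEq] at hy
      subst hy
      have : G.lastV (G.outHist p k) = x := by
        simp only [Option.mem_def] at hx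
        simp [lastV, hx]
      rw [this] at hE
      rw [this]
      exact hE

lemma outcome_E (p : P → List V → V) (d : ℕ) (hp : G.IsProfileTrunc d p) (k : ℕ)
    (hk : k < d) : G.E (G.outcome p k) (G.outcome p (k + 1)) := by
  rw [outcome_succ]
  exact hp _ _ (G.outHist_hist p d hp k hk.le) (by rw [outHist_length]; omega) rfl

lemma cost_le_iff (i : P) (ρ : ℕ → V) (k : ℕ) :
    G.cost i ρ ≤ (k : ℕ∞) ↔ ∃ l ≤ k, ρ l ∈ G.goal i := by
  constructor
  · intro h
    have h' : G.cost i ρ < ((k + 1 : ℕ) : ℕ∞) := lt_of_le_of_lt h (by exact_mod_cast Nat.lt_succ_self k)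
    unfold cost at h'
    rw [sInf_lt_iff] at h'
    obtain ⟨_, ⟨l, rfl, hl⟩, h2⟩ := h'
    exact ⟨l, by have : l < k + 1 := by exact_mod_cast h2
                 omega, hl⟩
  · rintro ⟨l, hl, h⟩
    refine le_trans (sInf_le ⟨l, rfl, h⟩) (by exact_mod_cast hl)

lemma costList_le_iff (i : P) (p : P → List V → V) (d k : ℕ) :
    G.costList i (G.outHist p d) ≤ (k : ℕ∞) ↔ ∃ l ≤ k, l ≤ d ∧ G.outcome p l ∈ G.goal i := by
  constructor
  · intro h
    have h' : G.costList i (G.outHist p d) < ((k + 1 : ℕ) : ℕ∞) :=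
      lt_of_le_of_lt h (by exact_mod_cast Nat.lt_succ_self k)
    unfold costList at h'
    rw [sInf_lt_iff] at h'
    obtain ⟨_, ⟨l, rfl, hl, hg⟩, h2⟩ := h'
    rw [outHist_length] at hl
    have h3 : l < k + 1 := by exact_mod_cast h2
    rw [G.outHist_getD p d l (by omega)] at hg
    exact ⟨l, by omega, by omega, hg⟩
  · rintro ⟨l, hl, hd, h⟩
    refine le_trans (sInf_le ⟨l, rfl, by rw [outHist_length]; omega, ?_⟩) (by exact_mod_cast hl)
    rwa [G.outHist_getD p d l hd]

lemma enat_le_of (x y : ℕ∞) (h : ∀ k : ℕ, y ≤ k → x ≤ k) : x ≤ y := by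
  induction y using ENat.recTopCoe with
  | top => exact le_top
  | coe y => exact h y le_rfl

lemma cost_le_costList (i : P) (p : P → List V → V) (d : ℕ) :
    G.cost i (G.outcome p) ≤ G.costList i (G.outHist p d) := by
  refine enat_le_of _ _ fun k hk => ?_
  rw [costList_le_iff] at hk
  rw [cost_le_iff]
  obtain ⟨l, h1, _, h2⟩ := hk
  exact ⟨l, h1, h2⟩

lemma costList_eq_top (i : P) (p : P → List V → V) (d : ℕ) :
    G.costList i (G.outHist p d) = ⊤ ↔ ∀ l ≤ d, G.outcome p l ∉ G.goal i := by
  constructor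
  · intro h l hl hg
    have := (G.costList_le_iff i p d l).2 ⟨l, le_rfl, hl, hg⟩
    rw [h] at this
    simp at this
  · intro h
    rw [eq_top_iff]
    refine enat_le_of _ _ fun k hk => ?_
    rw [costList_le_iff] at hk
    obtain ⟨l, _, h2, h3⟩ := hk
    exact absurd h3 (h l h2)

lemma cost_eq_top (i : P) (ρ : ℕ → V) :
    G.cost i ρ = ⊤ ↔ ∀ l, ρ l ∉ G.goal i := by
  constructor
  · intro h l hg
    have := (G.cost_le_iff i ρ l).2 ⟨l, le_rfl, hg⟩
    rw [h] at this
    simp at this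
  · intro h
    rw [eq_top_iff]
    refine enat_le_of _ _ fun k hk => ?_
    rw [cost_le_iff] at hk
    obtain ⟨l, _, h3⟩ := hk
    exact absurd h3 (h l)

lemma profTrunc_update (d : ℕ) (p : P → List V → V) (hp : G.IsProfileTrunc d p) (i : P)
    (σ : List V → V) (hσ : G.IsStrategyTrunc d i σ) :
    G.IsProfileTrunc d (Function.update p i σ) := by
  intro j
  by_cases h : j = i
  · subst h; simpa using hσ
  · simpa [h] using hp j

/-- Attractor deviation. -/
lemma attract (d m t : ℕ) (hd : m + t ≤ d) (p : P → List V → V) (hp : G.IsProfileTrunc d p)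
    (i : P) (T : Set V) (hm : G.outcome p m ∈ G.attr T i t) :
    ∃ σ', G.IsStrategyTrunc d i σ' ∧
      ∃ l ≤ m + t, G.outcome (Function.update p i σ') l ∈ T := by
  classical
  let σ' : List V → V := fun h => if h.length ≤ m then p i h else
    G.pick (G.attr T i (t - (h.length - m))) (G.lastV h)
  have hσ : G.IsStrategyTrunc d i σ' := by
    intro h h1 h2 h3
    simp only [σ']
    split_ifs
    · exact hp i h h1 h2 h3
    · exact G.pick_E _ _
  refine ⟨σ', hσ, ?_⟩
  have hp' := G.profTrunc_update d p hp i σ' hσ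
  set p' := Function.update p i σ' with hp'def
  have key : ∀ s ≤ t, (∃ l ≤ m + s, G.outcome p' l ∈ T) ∨
      G.outcome p' (m + s) ∈ G.attr T i (t - s) := by
    intro s hs
    induction s with
    | zero =>
      right
      have : G.outcome p' m = G.outcome p m := by
        refine G.outcome_congr p' p m ?_ m le_rfl
        intro k l hl
        by_cases hk : k = i
        · subst hk; simp [p', σ', hl]
        · simp [p', hk]
      simpa [this] using hm
    | succ s ih =>
      rcases ih (by omega) with ⟨l, hl, h⟩ | h
      · exact Or.inl ⟨l, by omega, h⟩
      · obtain ⟨r, hr⟩ : ∃ r, t - s = r + 1 := ⟨t - s - 1, by omega⟩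
        have hE := G.outcome_E p' d hp' (m + s) (by omega)
        rw [hr] at h
        have hr' : t - (s + 1) = r := by omega
        rw [hr', ← add_assoc]
        rcases h with h | ⟨h1, h2⟩ | ⟨h1, h2⟩
        · exact Or.inl ⟨m + s, by omega, h⟩
        · right
          rw [outcome_succ, h1]
          simp only [p', Function.update_self, σ']
          rw [if_neg (by rw [outHist_length]; omega), outHist_length]
          have : t - (m + s + 1 - m) = r := by omega
          rw [this]
          exact G.pick_mem _ _ h2
        · right
          exact h2 _ hE
  rcases key t le_rfl with h | h
  · exact h
  · refine ⟨m + t, le_rfl, ?_⟩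
    simpa [attr] using h

/-- Safety invariance. -/
lemma safe_inv [Fintype V] (d m : ℕ) (q : P → List V → V) (hq : G.IsProfileTrunc d q)
    (j : P) (T : Set V)
    (hs : ∀ i, i ≠ j → ∀ h : List V, m < h.length →
      q i h = G.pick (G.attr T j (Fintype.card V))ᶜ (G.lastV h))
    (h0 : G.outcome q m ∉ G.attr T j (Fintype.card V)) (k : ℕ) (hk : m + k ≤ d) :
    G.outcome q (m + k) ∉ G.attr T j (Fintype.card V) := by
  induction k with
  | zero => exact h0
  | succ k ih =>
    have ih := ih (by omega)
    have hE := G.outcome_E q d hq (m + k) (by omega)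
    rw [← add_assoc]
    rw [← G.attr_stable T j (Fintype.card V + 1) (by omega)] at ih
    simp only [attr, Set.mem_setOf_eq, not_or, not_and, not_exists] at ih
    obtain ⟨_, h1, h2⟩ := ih
    by_cases ho : G.owner (G.outcome q (m + k)) = j
    · exact h1 ho _ hE
    · rw [outcome_succ, hs _ ho _ (by rw [outHist_length]; omega)]
      refine G.pick_mem (G.attr T j (Fintype.card V))ᶜ _ ?_
      have := h2 ho
      push Not at this
      exact this

/-- Finite memory for strategies which are positional after a bounded time. -/
lemma finMem [Fintype V] (i : P) (m : ℕ) (σ : List V → V) (f : V → V)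
    (h : ∀ l : List V, m < l.length → σ l = f (G.lastV l)) : G.FiniteMemory i σ := by
  classical
  let g : V → List V := fun v => if hv : ∃ l, G.IsHistory l ∧ m < l.length ∧ G.lastV l = v
    then hv.choose else []
  refine ⟨(List.finite_length_le V m).toFinset ∪ Finset.univ.image g, ?_⟩
  intro l hl
  by_cases hm : l.length ≤ m
  · exact ⟨l, by simp [hm], hl, fun δ _ _ _ _ => rfl⟩
  · have hv : ∃ l', G.IsHistory l' ∧ m < l'.length ∧ G.lastV l' = G.lastV l :=
      ⟨l, hl, by omega, rfl⟩
    have hg : g (G.lastV l) = hv.choose := dif_pos hv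
    obtain ⟨h1, h2, h3⟩ := hv.choose_spec
    rw [← hg] at h1 h2 h3
    refine ⟨g (G.lastV l), by simp, h1, ?_⟩
    intro δ _ _ _ _
    rw [h _ (by simp; omega), h _ (by simp; omega)]
    congr 1
    rcases List.eq_nil_or_concat δ with rfl | ⟨δ', x, rfl⟩
    · simpa using h3.symm
    · simp [lastV]

end General

section Two

variable {V : Type} (G : ReachGame (Fin 2) V)

lemma fin2_cases : ∀ i j : Fin 2, i ≠ j → (i = 1 ∧ j = 0) ∨ (i = 0 ∧ j = 1) := by decide

lemma fin2_eq : ∀ k i j : Fin 2, k ≠ j → i ≠ j → k = i := by decide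

lemma fin2_sub : ∀ i j k : Fin 2, i ≠ j → 1 - k = i ∨ 1 - k = j := by decide

lemma fin2_ne : ∀ j : Fin 2, 1 - j ≠ j := by decide

lemma secure_of (τ : Fin 2 → List V → V)
    (h : ∀ i j : Fin 2, i ≠ j → ∀ σ', G.IsStrategy j σ' →
      G.cost j (G.outcome τ) ≤ G.cost j (G.outcome (Function.update τ j σ')) ∧
      (G.cost j (G.outcome (Function.update τ j σ')) = G.cost j (G.outcome τ) →
        G.cost i (G.outcome (Function.update τ j σ')) ≤ G.cost i (G.outcome τ))) :
    G.IsSecure τ := by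
  constructor
  · intro σ' hσ
    obtain ⟨h1, h2⟩ := h 1 0 (by decide) σ' hσ
    rintro (h3 | ⟨h3, h4⟩)
    · exact absurd h3 (not_lt.2 h1)
    · exact absurd h4 (not_lt.2 (h2 h3.symm))
  · intro σ' hσ
    obtain ⟨h1, h2⟩ := h 0 1 (by decide) σ' hσ
    rintro (h3 | ⟨h3, h4⟩)
    · exact absurd h3 (not_lt.2 h1)
    · exact absurd h4 (not_lt.2 (h2 h3.symm))

lemma of_secureTrunc (d : ℕ) (p : Fin 2 → List V → V) (hs : G.IsSecureTrunc d p)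
    (i j : Fin 2) (hij : i ≠ j) (σ' : List V → V) (hσ : G.IsStrategyTrunc d j σ') :
    G.costList j (G.outHist p d) ≤ G.costList j (G.outHist (Function.update p j σ') d) ∧
      (G.costList j (G.outHist (Function.update p j σ') d) = G.costList j (G.outHist p d) →
        G.costList i (G.outHist (Function.update p j σ') d) ≤ G.costList i (G.outHist p d)) := by
  have aux : ∀ (x y : ℕ∞ × ℕ∞), ¬ prec1 x y → x.1 ≤ y.1 ∧ (y.1 = x.1 → y.2 ≤ x.2) := by
    intro x y h
    unfold prec1 at h
    push Not at h
    exact ⟨h.1, fun e => h.2 e.symm⟩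
  have aux2 : ∀ (x y : ℕ∞ × ℕ∞), ¬ prec2 x y → x.2 ≤ y.2 ∧ (y.2 = x.2 → y.1 ≤ x.1) := by
    intro x y h
    unfold prec2 at h
    push Not at h
    exact ⟨h.1, fun e => h.2 e.symm⟩
  obtain ⟨rfl, rfl⟩ | ⟨rfl, rfl⟩ : (i = 1 ∧ j = 0) ∨ (i = 0 ∧ j = 1) := fin2_cases i j hij
  · exact aux _ _ (hs.1 σ' hσ)
  · exact aux2 _ _ (hs.2 σ' hσ)

variable [Fintype V]

open Classical in
/-- memory bound of player `i` -/
noncomputable def bnd (d : ℕ) (prof : Fin 2 → List V → V) (i : Fin 2) : ℕ :=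
  if G.costList (1 - i) (G.outHist prof d) = ⊤ then Fintype.card V else d

open Classical in
/-- the final profile -/
noncomputable def tau (d : ℕ) (prof : Fin 2 → List V → V) (i : Fin 2) (h : List V) : V :=
  if h.length ≤ G.bnd d prof i then prof i h else
    G.pick (G.attr (G.goal (1 - i)) (1 - i) (Fintype.card V))ᶜ (G.lastV h)

lemma sub_of_ne (i j : Fin 2) (h : i ≠ j) : 1 - i = j := by
  revert i j; decide

lemma bnd_le (d : ℕ) (hd : 2 * Fintype.card V ≤ d) (prof : Fin 2 → List V → V) (i : Fin 2) :
    G.bnd d prof i ≤ d := by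
  unfold bnd
  split_ifs <;> omega

lemma tau_profile (d : ℕ) (hd : 2 * Fintype.card V ≤ d) (prof : Fin 2 → List V → V)
    (hprof : G.IsProfileTrunc d prof) : G.IsProfile (G.tau d prof) := by
  intro i h h1 h2
  unfold tau
  split_ifs with h3
  · exact hprof i h h1 (h3.trans (G.bnd_le d hd prof i)) h2
  · exact G.pick_E _ _

/-- The value of the visited player is small when the other one is unvisited. -/
lemma value_le (d : ℕ) (hd : 2 * Fintype.card V ≤ d) (prof : Fin 2 → List V → V)
    (hprof : G.IsProfileTrunc d prof) (hs : G.IsSecureTrunc d prof)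
    (i j : Fin 2) (hij : i ≠ j) (hj : G.costList j (G.outHist prof d) = ⊤)
    (hi : G.costList i (G.outHist prof d) ≠ ⊤) :
    G.costList i (G.outHist prof d) ≤ (Fintype.card V : ℕ∞) := by
  by_cases h0 : G.v0 ∈ G.attr (G.goal i) i (Fintype.card V)
  · obtain ⟨σ', h1, l, hl, h2⟩ := G.attract d 0 (Fintype.card V) (by omega) prof hprof i (G.goal i)
      (by simpa [outcome, outHist, lastV] using h0)
    refine le_trans (G.of_secureTrunc d prof hs j i hij.symm σ' h1).1 ?_
    rw [costList_le_iff]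
    exact ⟨l, by omega, by omega, h2⟩
  · exfalso
    let σ' : List V → V := fun h => G.pick (G.attr (G.goal i) i (Fintype.card V))ᶜ (G.lastV h)
    have hσ : G.IsStrategyTrunc d j σ' := fun h _ _ _ => G.pick_E _ _
    have hp' := G.profTrunc_update d prof hprof j σ' hσ
    obtain ⟨h1, h2⟩ := G.of_secureTrunc d prof hs i j hij σ' hσ
    rw [hj, top_le_iff] at h1
    have h3 := h2 (h1.trans hj.symm)
    have h4 : G.costList i (G.outHist (Function.update prof j σ') d) = ⊤ := by
      rw [costList_eq_top]
      intro l hl hg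
      have := G.safe_inv d 0 _ hp' i (G.goal i) (fun k hk h _ => by
        obtain rfl : k = j := fin2_eq k j i hk hij.symm
        simp [σ']) (by simpa [outcome, outHist, lastV] using h0) l (by omega)
      rw [zero_add] at this
      exact this (G.attr_base _ _ _ hg)
    rw [h4, top_le_iff] at h3
    exact hi h3

/-- Key lemma on plays consistent with `tau i`. -/
lemma low (d : ℕ) (hd : 2 * Fintype.card V ≤ d) (prof : Fin 2 → List V → V)
    (hprof : G.IsProfileTrunc d prof) (hs : G.IsSecureTrunc d prof)
    (i j : Fin 2) (hij : i ≠ j) (q : Fin 2 → List V → V) (hq : G.IsProfile q)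
    (hqi : q i = G.tau d prof i) :
    G.costList j (G.outHist prof d) ≤ G.cost j (G.outcome q) ∧
    (G.cost j (G.outcome q) = G.costList j (G.outHist prof d) →
      G.cost i (G.outcome q) ≤ G.costList i (G.outHist prof d)) := by
  have hsub := sub_of_ne i j hij
  have hqj : G.IsStrategyTrunc d j (q j) := fun h h1 _ h3 => hq j h h1 h3
  have hp' := G.profTrunc_update d prof hprof j (q j) hqj
  obtain ⟨s1, s2⟩ := G.of_secureTrunc d prof hs i j hij (q j) hqj
  have agree : ∀ k ≤ G.bnd d prof i, G.outcome q k = G.outcome (Function.update prof j (q j)) k := by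
    refine G.outcome_congr _ _ _ ?_
    intro k l hl
    by_cases hk : k = j
    · subst hk; simp
    · obtain rfl : k = i := fin2_eq k i j hk hij
      simp [hk, hqi, tau, hl]
  by_cases hj : G.costList j (G.outHist prof d) = ⊤
  · have hb : G.bnd d prof i = Fintype.card V := by simp [bnd, hsub, hj]
    rw [hb] at agree
    rw [hj, top_le_iff] at s1
    have s3 := s2 (s1.trans hj.symm)
    have hn : G.outcome q (Fintype.card V) ∉ G.attr (G.goal j) j (Fintype.card V) := by
      intro hmem
      rw [agree _ le_rfl] at hmem
      obtain ⟨σ', h1, l, hl, h2⟩ := G.attract d _ _ (by omega) _ hp' j _ hmem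
      rw [Function.update_idem] at h2
      have := (G.of_secureTrunc d prof hs i j hij σ' h1).1
      rw [hj, top_le_iff, costList_eq_top] at this
      exact this l (by omega) h2
    have hnev : G.cost j (G.outcome q) = ⊤ := by
      rw [cost_eq_top]
      intro l hg
      rcases Nat.lt_or_ge l (Fintype.card V) with h | h
      · rw [agree l h.le] at hg
        rw [costList_eq_top] at s1
        exact s1 l (by omega) hg
      · obtain ⟨r, rfl⟩ := Nat.exists_eq_add_of_le h
        refine G.safe_inv (Fintype.card V + r) (Fintype.card V) q
          (fun k h h1 _ h3 => hq k h h1 h3) j (G.goal j) ?_ hn r le_rfl (G.attr_base _ _ _ hg)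
        intro k hk h hlen
        obtain rfl : k = i := fin2_eq k i j hk hij
        rw [hqi, tau, hb, if_neg (by omega), hsub]
    refine ⟨by rw [hnev]; exact le_top, fun _ => ?_⟩
    by_cases hi : G.costList i (G.outHist prof d) = ⊤
    · rw [hi]; exact le_top
    · have hv := G.value_le d hd prof hprof hs i j hij hj hi
      refine enat_le_of _ _ fun k hk => ?_
      have h5 : G.costList i (G.outHist (Function.update prof j (q j)) d) ≤
          ((min k (Fintype.card V) : ℕ) : ℕ∞) := by
        rcases Nat.le_total k (Fintype.card V) with h | h
        · rw [Nat.min_eq_left h]; exact s3.trans hk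
        · rw [Nat.min_eq_right h]; exact s3.trans hv
      rw [costList_le_iff] at h5
      obtain ⟨l, h6, h7, h8⟩ := h5
      rw [cost_le_iff]
      refine ⟨l, by omega, ?_⟩
      rwa [agree l (by omega)]
  · have hb : G.bnd d prof i = d := by simp [bnd, hsub, hj]
    rw [hb] at agree
    obtain ⟨b, hbb⟩ := ENat.ne_top_iff_exists.1 hj
    have hbd : b ≤ d := by
      obtain ⟨l, h1, h2, h3⟩ := (G.costList_le_iff j prof d b).1 hbb.symm.le
      have := (G.costList_le_iff j prof d l).2 ⟨l, le_rfl, h2, h3⟩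
      rw [← hbb] at this
      have : b ≤ l := by exact_mod_cast this
      omega
    have tr : ∀ k ≤ d, G.cost j (G.outcome q) ≤ (k : ℕ∞) →
        G.costList j (G.outHist (Function.update prof j (q j)) d) ≤ (k : ℕ∞) := by
      intro k hk h
      rw [cost_le_iff] at h
      obtain ⟨l, h1, h2⟩ := h
      rw [costList_le_iff]
      exact ⟨l, h1, by omega, by rwa [← agree l (by omega)]⟩
    have tr2 : ∀ k, G.cost k (G.outcome q) ≤
        G.costList k (G.outHist (Function.update prof j (q j)) d) := by
      intro k
      refine enat_le_of _ _ fun m hm => ?_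
      rw [costList_le_iff] at hm
      obtain ⟨l, h1, h2, h3⟩ := hm
      rw [cost_le_iff]
      exact ⟨l, h1, by rwa [agree l (by omega)]⟩
    constructor
    · refine enat_le_of _ _ fun k hk => ?_
      rcases Nat.le_total k d with h | h
      · exact s1.trans (tr k h hk)
      · rw [← hbb]; exact_mod_cast hbd.trans h
    · intro he
      have h1 := tr b hbd (by rw [he, hbb])
      rw [hbb] at h1
      exact (tr2 i).trans (s2 (le_antisymm h1 s1))

lemma tau_cost (d : ℕ) (hd : 2 * Fintype.card V ≤ d) (prof : Fin 2 → List V → V)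
    (hprof : G.IsProfileTrunc d prof) (hs : G.IsSecureTrunc d prof) (j : Fin 2) :
    G.cost j (G.outcome (G.tau d prof)) = G.costList j (G.outHist prof d) := by
  have hτ := G.tau_profile d hd prof hprof
  have hge : ∀ i j : Fin 2, i ≠ j → _ := fun i j hij =>
    G.low d hd prof hprof hs i j hij (G.tau d prof) hτ rfl
  obtain ⟨i, hij⟩ : ∃ i : Fin 2, i ≠ j := ⟨1 - j, fin2_ne j⟩
  refine le_antisymm ?_ (hge i j hij).1
  by_cases hi : G.costList i (G.outHist prof d) = ⊤
  · refine (hge j i hij.symm).2 ?_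
    have := (hge j i hij.symm).1
    rw [hi, top_le_iff] at this
    rw [this, hi]
  · by_cases hj : G.costList j (G.outHist prof d) = ⊤
    · rw [hj]; exact le_top
    · have : G.outHist (G.tau d prof) d = G.outHist prof d := by
        refine G.outHist_congr _ _ d ?_ d le_rfl
        intro k l hl
        have : G.bnd d prof k = d := by
          unfold bnd
          rw [if_neg]
          obtain h | h : 1 - k = i ∨ 1 - k = j := fin2_sub i j k hij
          · rwa [h]
          · rwa [h]
        simp [tau, this, hl]
      rw [← this]
      exact G.cost_le_costList _ _ _

end Two

end ReachGame

/-- Let `d ≥ (|Π|+1)·2·|V|`. If the truncated game `G^d` of a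
quantitative two-player reachability game `G` has a secure equilibrium of a certain
type, then `G` has a finite-memory secure equilibrium of the same type. -/
theorem trunc_secure_to_finiteMemory_secure {V : Type} [Fintype V]
    (G : ReachGame (Fin 2) V)
    (d : ℕ) (hd : (Fintype.card (Fin 2) + 1) * 2 * Fintype.card V ≤ d)
    (prof : Fin 2 → List V → V)
    (hprof : G.IsProfileTrunc d prof) (hsec : G.IsSecureTrunc d prof) :
    ∃ τ : Fin 2 → List V → V,
      G.IsProfile τ ∧ G.FiniteMemoryProfile τ ∧ G.IsSecure τ ∧
      G.typeOf τ = G.typeOfTrunc d prof := by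
  have hd' : 2 * Fintype.card V ≤ d := by
    rw [Fintype.card_fin] at hd
    omega
  have hτ := G.tau_profile d hd' prof hprof
  have hc := G.tau_cost d hd' prof hprof hsec
  refine ⟨G.tau d prof, hτ, ?_, ?_, ?_⟩
  · intro i
    refine G.finMem i (G.bnd d prof i) _
      (G.pick (G.attr (G.goal (1 - i)) (1 - i) (Fintype.card V))ᶜ) ?_
    intro l hl
    rw [ReachGame.tau, if_neg (by omega)]
  · refine G.secure_of _ ?_
    intro i j hij σ' hσ
    have hq : G.IsProfile (Function.update (G.tau d prof) j σ') := by
      intro k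
      by_cases h : k = j
      · subst h; simpa using hσ
      · simpa [h] using hτ k
    rw [hc, hc]
    exact G.low d hd' prof hprof hsec i j hij _ hq (by simp [hij])
  · ext i
    have h1 : i ∈ G.typeOf (G.tau d prof) ↔ ¬ G.cost i (G.outcome (G.tau d prof)) = ⊤ := by
      rw [ReachGame.cost_eq_top]
      simp [ReachGame.typeOf]
    have h2 : i ∈ G.typeOfTrunc d prof ↔ ¬ G.costList i (G.outHist prof d) = ⊤ := by
      rw [ReachGame.costList_eq_top]
      simp only [ReachGame.typeOfTrunc, ReachGame.visitL, Set.mem_setOf_eq]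
      push Not
      constructor
      · rintro ⟨v, hv, hg⟩
        obtain ⟨l, hl, rfl⟩ := List.mem_iff_getElem.1 hv
        have hl' := hl
        rw [ReachGame.outHist_length] at hl'
        refine ⟨l, by omega, ?_⟩
        rw [← G.outHist_getD prof d l (by omega), List.getD_eq_getElem _ _ hl]
        exact hg
      · rintro ⟨l, hl, hg⟩
        have hl' : l < (G.outHist prof d).length := by
          rw [ReachGame.outHist_length]; omega
        rw [← G.outHist_getD prof d l hl, List.getD_eq_getElem _ _ hl'] at hg
        exact ⟨_, List.getElem_mem hl', hg⟩
    rw [h1, h2, hc]
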